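/- arXiv:2204.05491 — 2 statements merged into one kernel-verified Lean document; each statement's English description precedes it below -/
import Mathlib

section
/- Let n ≥ 3, m ∈ ℝ, and let g = (g_{ij}) be a smooth symmetric-matrix–valued function on {x ∈ ℝⁿ : |x| > 1} of the form g_{ij}(x) = (1 + m/(2|x|^{n-2}))^{4/(n-2)} δ_{ij} + h_{ij}(x), where the error term h satisfies |h(x)| + |x|·|∂h(x)| ≤ C·|x|^{1-n} for some constant C. Then the ADM flux limit exists and equals m: lim_{ρ→∞} (1/(2(n-1)·|S^{n-1}|)) ∫_{{|x|=ρ}} ∑_{i,j} (∂_j g_{ij} - ∂_i g_{jj})(x) · (x_i/ρ) dσ(x) = m, where dσ is the (n-1)-dimensional surface measure on the sphere {|x| = ρ} and |S^{n-1}| is the surface measure of the unit sphere in ℝⁿ. -/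
open MeasureTheory
open scoped BigOperators Pointwise

lemma sphere_scale {n : ℕ} (hn : 1 ≤ n) {ρ : ℝ} (hρ : 0 < ρ) :
    (μH[(n : ℝ) - 1] (Metric.sphere (0 : EuclideanSpace ℝ (Fin n)) ρ)).toReal =
     ρ ^ ((n:ℝ) - 1) * (μH[(n : ℝ) - 1] (Metric.sphere (0 : EuclideanSpace ℝ (Fin n)) 1)).toReal := by
  have h1 : (1:ℝ) ≤ n := by exact_mod_cast hn
  have h2 : Metric.sphere (0 : EuclideanSpace ℝ (Fin n)) ρ = ρ • Metric.sphere (0 : EuclideanSpace ℝ (Fin n)) 1 := by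
    rw [smul_sphere' hρ.ne']
    simp [abs_of_pos hρ]
  rw [h2, Measure.hausdorffMeasure_smul₀ (by linarith) hρ.ne', ENNReal.smul_def, smul_eq_mul, ENNReal.toReal_mul]
  congr 1
  simp [abs_of_pos hρ]

lemma sphere_pos (k : ℕ) :
    0 < μH[(k : ℝ)] (Metric.sphere (0 : EuclideanSpace ℝ (Fin (k+1))) 1) := by
  let P : EuclideanSpace ℝ (Fin (k+1)) → (Fin k → ℝ) := fun x i => x i.succ
  have hP : LipschitzWith 1 P := by
    refine LipschitzWith.of_dist_le_mul fun x y => ?_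
    rw [NNReal.coe_one, one_mul, dist_pi_le_iff dist_nonneg]
    intro i
    rw [dist_eq_norm, dist_eq_norm]
    exact PiLp.norm_apply_le (x - y) i.succ
  have h1 := (hP.lipschitzOnWith (s := Metric.sphere 0 1)).hausdorffMeasure_image_le
    (Nat.cast_nonneg (α := ℝ) k)
  have h2 : (μH[(k:ℝ)] : Measure (Fin k → ℝ)) = volume := by
    have := @hausdorffMeasure_pi_real (Fin k) _
    rwa [Fintype.card_fin] at this
  rw [h2] at h1
  have hO : IsOpen {y : Fin k → ℝ | ∑ i, y i ^ 2 < 1} :=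
    isOpen_lt (by fun_prop) continuous_const
  have h3 : 0 < volume {y : Fin k → ℝ | ∑ i, y i ^ 2 < 1} :=
    hO.measure_pos volume ⟨0, by simp⟩
  have h4 : {y : Fin k → ℝ | ∑ i, y i ^ 2 < 1} ⊆ P '' Metric.sphere 0 1 := by
    intro y hy
    have hy' : ∑ i, y i ^ 2 < 1 := hy
    refine ⟨WithLp.toLp 2 (Fin.cons (√(1 - ∑ i, y i ^ 2)) y), ?_, ?_⟩
    · rw [mem_sphere_zero_iff_norm, EuclideanSpace.norm_eq]
      simp [Fin.sum_univ_succ, Real.sq_sqrt (sub_nonneg.2 hy'.le)]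
    · ext i; simp [P]
  have h5 := h3.trans_le (measure_mono h4)
  have := h5.trans_le h1
  simpa using this

lemma sphere_fin (k : ℕ) :
    μH[(k : ℝ)] (Metric.sphere (0 : EuclideanSpace ℝ (Fin (k+1))) 1) < ⊤ := by
  let f : Fin (k+1) → ℝ → (Fin k → ℝ) → EuclideanSpace ℝ (Fin (k+1)) := fun i s y =>
    WithLp.toLp 2 (i.insertNth s y)
  let F : Fin (k+1) → ℝ → (Fin k → ℝ) → EuclideanSpace ℝ (Fin (k+1)) := fun i s y =>
    ‖f i s y‖⁻¹ • f i s y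
  have h2 : (μH[(k:ℝ)] : Measure (Fin k → ℝ)) = volume := by
    have := @hausdorffMeasure_pi_real (Fin k) _
    rwa [Fintype.card_fin] at this
  have hfd : ∀ i s, ContDiff ℝ 1 (f i s) := by
    intro i s
    rw [contDiff_euclidean]
    intro j
    refine Fin.succAboveCases i ?_ (fun j => ?_) j
    · simp only [f, Fin.insertNth_apply_same]; fun_prop
    · simp only [f, Fin.insertNth_apply_succAbove]; fun_prop
  have hf0 : ∀ i s y, s ≠ 0 → f i s y ≠ 0 := by
    intro i s y hs h
    apply hs
    have := congrArg (fun v : EuclideanSpace ℝ (Fin (k+1)) => v i) h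
    simpa [f] using this
  have hFfin : ∀ i s, s ≠ 0 → μH[(k : ℝ)] (F i s '' Metric.closedBall 0 1) < ⊤ := by
    intro i s hs
    have hFd : ContDiff ℝ 1 (F i s) := by
      refine ContDiff.smul (ContDiff.inv ((hfd i s).norm ℝ fun y => hf0 i s y hs) ?_) (hfd i s)
      intro y; exact norm_ne_zero_iff.2 (hf0 i s y hs)
    obtain ⟨K, hK⟩ := hFd.contDiffOn.exists_lipschitzOnWith (s := Metric.closedBall 0 1) one_ne_zero (convex_closedBall _ _) (isCompact_closedBall _ _)
    refine (hK.hausdorffMeasure_image_le (Nat.cast_nonneg (α := ℝ) k)).trans_lt ?_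
    rw [h2]
    exact ENNReal.mul_lt_top (by simp) measure_closedBall_lt_top
  have hcov : Metric.sphere (0 : EuclideanSpace ℝ (Fin (k+1))) 1 ⊆
      (⋃ i, F i 1 '' Metric.closedBall 0 1) ∪ (⋃ i, F i (-1) '' Metric.closedBall 0 1) := by
    intro x hx
    rw [mem_sphere_zero_iff_norm] at hx
    obtain ⟨i, -, hi⟩ := Finset.exists_max_image Finset.univ (fun i => |x i|) Finset.univ_nonempty
    have hxi : x i ≠ 0 := by
      intro h0
      have : x = 0 := by
        ext j
        have := hi j (Finset.mem_univ _)
        simpa [h0] using this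
      simp [this] at hx
    have hxp : 0 < |x i| := abs_pos.2 hxi
    let y : Fin k → ℝ := fun j => x (i.succAbove j) / |x i|
    have hy : y ∈ Metric.closedBall (0 : Fin k → ℝ) 1 := by
      rw [mem_closedBall_zero_iff, pi_norm_le_iff_of_nonneg zero_le_one]
      intro j
      simp only [y, Real.norm_eq_abs, abs_div, abs_abs]
      exact (div_le_one hxp).2 (hi _ (Finset.mem_univ _))
    have key : F i (x i / |x i|) y = x := by
      have h1 : f i (x i / |x i|) y = |x i|⁻¹ • x := by
        ext j
        refine Fin.succAboveCases i ?_ (fun j => ?_) j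
        · simp [f, div_eq_inv_mul]
        · simp [f, y, div_eq_inv_mul]
      simp only [F, h1, norm_smul, hx, smul_smul]
      simp [hxi]
    rcases lt_or_gt_of_ne hxi with h | h
    · right
      refine Set.mem_iUnion.2 ⟨i, y, hy, ?_⟩
      rw [abs_of_neg h, div_neg, div_self hxi] at key
      exact key
    · left
      refine Set.mem_iUnion.2 ⟨i, y, hy, ?_⟩
      rw [abs_of_pos h, div_self hxi] at key
      exact key
  refine (measure_mono hcov).trans_lt ((measure_union_le _ _).trans_lt (ENNReal.add_lt_top.2 ⟨?_, ?_⟩))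
  · refine (measure_iUnion_le _).trans_lt ?_
    rw [tsum_fintype]
    exact ENNReal.sum_lt_top.2 fun i _ => hFfin i 1 one_ne_zero
  · refine (measure_iUnion_le _).trans_lt ?_
    rw [tsum_fintype]
    exact ENNReal.sum_lt_top.2 fun i _ => hFfin i (-1) (by norm_num)

lemma hasDerivAt_psi (n : ℕ) (hn : 3 ≤ n) (m r : ℝ) (hr : 0 < r)
    (hb : 0 < 1 + m / (2 * r ^ ((n : ℝ) - 2))) :
    HasDerivAt (fun r : ℝ => (1 + m / (2 * r ^ ((n : ℝ) - 2))) ^ ((4 : ℝ) / ((n : ℝ) - 2)))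
      (-2 * m * r ^ (1 - (n : ℝ)) *
        (1 + m / (2 * r ^ ((n : ℝ) - 2))) ^ ((4 : ℝ) / ((n : ℝ) - 2) - 1)) r := by
  have h3 : (3:ℝ) ≤ n := by exact_mod_cast hn
  have hn2 : (n:ℝ) - 2 ≠ 0 := by linarith
  have h1 : HasDerivAt (fun r : ℝ => r ^ ((n:ℝ) - 2)) (((n:ℝ) - 2) * r ^ ((n:ℝ) - 2 - 1)) r :=
    Real.hasDerivAt_rpow_const (Or.inl hr.ne')
  have hp : 0 < r ^ ((n:ℝ) - 2) := Real.rpow_pos_of_pos hr _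
  have h2 := (((hasDerivAt_const r m).div (h1.const_mul 2) (by positivity)).const_add 1).rpow_const
    (p := (4 : ℝ) / ((n : ℝ) - 2)) (Or.inl hb.ne')
  refine h2.congr_deriv ?_
  have e1 : r ^ ((n:ℝ) - 2 - 1) = r ^ ((n:ℝ) - 2) / r := Real.rpow_sub_one hr.ne' _
  have e2 : r ^ (1 - (n:ℝ)) = (r ^ ((n:ℝ) - 2))⁻¹ / r := by
    rw [← Real.rpow_neg hr.le, ← Real.rpow_sub_one hr.ne']; congr 1; ring
  simp only [e1, e2, Pi.div_apply]
  field_simp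
  ring

lemma flux_est {n : ℕ} (hn : 3 ≤ n) (m : ℝ)
    (g h : EuclideanSpace ℝ (Fin n) → Fin n → Fin n → ℝ) (C : ℝ)
    (hsmooth : ∀ i j, ContDiffOn ℝ (⊤ : ℕ∞) (fun x => g x i j)
      {x : EuclideanSpace ℝ (Fin n) | 1 < ‖x‖})
    (hdef : ∀ x : EuclideanSpace ℝ (Fin n), 1 < ‖x‖ → ∀ i j,
      g x i j = (1 + m / (2 * ‖x‖ ^ ((n : ℝ) - 2))) ^ ((4 : ℝ) / ((n : ℝ) - 2))
          * (if i = j then 1 else 0) + h x i j)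
    (hdecay : ∀ x : EuclideanSpace ℝ (Fin n), 1 < ‖x‖ → ∀ i j,
      |h x i j| + ‖x‖ * ‖fderiv ℝ (fun y => h y i j) x‖ ≤ C * ‖x‖ ^ ((1 : ℝ) - n))
    (ρ : ℝ) (hρ : 1 < ρ) (hb : 0 < 1 + m / (2 * ρ ^ ((n : ℝ) - 2)))
    (x : EuclideanSpace ℝ (Fin n)) (hx : ‖x‖ = ρ) :
    ‖(∑ i : Fin n, ∑ j : Fin n,
            (fderiv ℝ (fun y => g y i j) x (EuclideanSpace.single j 1)
              - fderiv ℝ (fun y => g y j j) x (EuclideanSpace.single i 1)) * (x i / ρ)) -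
      2 * ((n:ℝ) - 1) * m * ρ ^ (1 - (n : ℝ)) *
        (1 + m / (2 * ρ ^ ((n : ℝ) - 2))) ^ ((4 : ℝ) / ((n : ℝ) - 2) - 1)‖
      ≤ (n * n * 2 * C) * ρ ^ (-(n:ℝ)) := by
  have hρ0 : 0 < ρ := by linarith
  have hx0 : x ≠ 0 := by rintro rfl; simp at hx; linarith
  have hx1 : 1 < ‖x‖ := hx ▸ hρ
  set φ : EuclideanSpace ℝ (Fin n) → ℝ := fun x =>
    (1 + m / (2 * ‖x‖ ^ ((n : ℝ) - 2))) ^ ((4 : ℝ) / ((n : ℝ) - 2)) with hφ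
  have hnd : DifferentiableAt ℝ (fun y : EuclideanSpace ℝ (Fin n) => ‖y‖) x :=
    (contDiffAt_norm (n := 1) ℝ hx0).differentiableAt one_ne_zero
  have hψ := hasDerivAt_psi n hn m ρ hρ0 hb
  have hφd : HasFDerivAt φ ((-2 * m * ρ ^ (1 - (n : ℝ)) *
        (1 + m / (2 * ρ ^ ((n : ℝ) - 2))) ^ ((4 : ℝ) / ((n : ℝ) - 2) - 1)) •
          fderiv ℝ (fun y : EuclideanSpace ℝ (Fin n) => ‖y‖) x) x := by
    rw [← hx] at hψ ⊢
    exact hψ.comp_hasFDerivAt x hnd.hasFDerivAt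
  set A := (-2 * m * ρ ^ (1 - (n : ℝ)) *
        (1 + m / (2 * ρ ^ ((n : ℝ) - 2))) ^ ((4 : ℝ) / ((n : ℝ) - 2) - 1)) with hA
  set N := fderiv ℝ (fun y : EuclideanSpace ℝ (Fin n) => ‖y‖) x with hN
  have hNx : N x = ρ := by rw [hN, ← hx]; exact hnd.fderiv_norm_self
  have hopen : IsOpen {x : EuclideanSpace ℝ (Fin n) | 1 < ‖x‖} :=
    isOpen_lt continuous_const continuous_norm
  have hgd : ∀ i j, fderiv ℝ (fun y => g y i j) x =
      ((if i = j then 1 else 0 : ℝ) * A) • N + fderiv ℝ (fun y => h y i j) x := by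
    intro i j
    have h1 : DifferentiableAt ℝ (fun y => g y i j) x :=
      ((hsmooth i j).contDiffAt (hopen.mem_nhds hx1)).differentiableAt (by simp)
    have h2 : (fun y => h y i j) =ᶠ[nhds x]
        fun y => g y i j - φ y * (if i = j then 1 else 0 : ℝ) := by
      filter_upwards [hopen.mem_nhds hx1] with y hy
      rw [hdef y hy i j]; simp [hφ]
    have h3 := h1.hasFDerivAt.sub (hφd.mul_const (if i = j then 1 else 0 : ℝ))
    have h4 := (h3.congr_of_eventuallyEq h2).fderiv
    rw [h4, smul_smul]; abel
  have hsum : ∑ i, x i • (EuclideanSpace.single i (1:ℝ)) = x := by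
    ext k
    simp [Finset.sum_apply, Pi.single_apply]
  have hNs : ∑ i, N (EuclideanSpace.single i 1) * x i = ρ := by
    rw [← hNx]
    conv_rhs => rw [← hsum]
    simp [mul_comm]
  have hmain : (∑ i : Fin n, ∑ j : Fin n,
      ((((if i = j then 1 else 0 : ℝ) * A) • N) (EuclideanSpace.single j 1)
        - (((if j = j then 1 else 0 : ℝ) * A) • N) (EuclideanSpace.single i 1)) * (x i / ρ))
      = (1 - n) * A := by
    have : ∀ i : Fin n, ∑ j : Fin n,
      ((((if i = j then 1 else 0 : ℝ) * A) • N) (EuclideanSpace.single j 1)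
        - (((if j = j then 1 else 0 : ℝ) * A) • N) (EuclideanSpace.single i 1)) * (x i / ρ)
        = ((1 - n) * A / ρ) * (N (EuclideanSpace.single i 1) * x i) := by
      intro i
      rw [← Finset.sum_mul, Finset.sum_sub_distrib]
      simp only [_root_.smul_apply, smul_eq_mul, ite_mul, one_mul, zero_mul, Finset.sum_ite_eq,
        Finset.mem_univ, if_true, Finset.sum_const, Finset.card_univ, Fintype.card_fin,
        nsmul_eq_mul]
      ring
    rw [Finset.sum_congr rfl fun i _ => this i, ← Finset.mul_sum, hNs]
    field_simp
  have hhb : ∀ i j k, |fderiv ℝ (fun y => h y i j) x (EuclideanSpace.single k 1)|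
      ≤ C * ρ ^ (-(n:ℝ)) := by
    intro i j k
    have h1 := hdecay x hx1 i j
    rw [hx] at h1
    have h2 : ‖fderiv ℝ (fun y => h y i j) x‖ ≤ C * ρ ^ (-(n:ℝ)) := by
      have h3 : ρ ^ (1 - (n:ℝ)) = ρ * ρ ^ (-(n:ℝ)) := by
        rw [sub_eq_add_neg, Real.rpow_add hρ0, Real.rpow_one]
      rw [h3] at h1
      have := abs_nonneg (h x i j)
      refine le_of_mul_le_mul_left ?_ hρ0
      linarith
    have h4 := (fderiv ℝ (fun y => h y i j) x).le_opNorm (EuclideanSpace.single k 1)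
    simp only [EuclideanSpace.norm_single, norm_one, mul_one, Real.norm_eq_abs] at h4
    exact h4.trans h2
  have heq : (∑ i : Fin n, ∑ j : Fin n,
            (fderiv ℝ (fun y => g y i j) x (EuclideanSpace.single j 1)
              - fderiv ℝ (fun y => g y j j) x (EuclideanSpace.single i 1)) * (x i / ρ)) -
      2 * ((n:ℝ) - 1) * m * ρ ^ (1 - (n : ℝ)) *
        (1 + m / (2 * ρ ^ ((n : ℝ) - 2))) ^ ((4 : ℝ) / ((n : ℝ) - 2) - 1)
      = ∑ i : Fin n, ∑ j : Fin n,
            (fderiv ℝ (fun y => h y i j) x (EuclideanSpace.single j 1)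
              - fderiv ℝ (fun y => h y j j) x (EuclideanSpace.single i 1)) * (x i / ρ) := by
    have e : 2 * ((n:ℝ) - 1) * m * ρ ^ (1 - (n : ℝ)) *
        (1 + m / (2 * ρ ^ ((n : ℝ) - 2))) ^ ((4 : ℝ) / ((n : ℝ) - 2) - 1) = (1 - n) * A := by
      rw [hA]; ring
    rw [e, ← hmain, sub_eq_iff_eq_add, ← Finset.sum_add_distrib]
    refine Finset.sum_congr rfl fun i _ => ?_
    rw [← Finset.sum_add_distrib]
    refine Finset.sum_congr rfl fun j _ => ?_
    rw [hgd i j, hgd j j, ContinuousLinearMap.add_apply, ContinuousLinearMap.add_apply]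
    ring
  rw [heq]
  have hterm : ∀ i j : Fin n, ‖(fderiv ℝ (fun y => h y i j) x (EuclideanSpace.single j 1)
              - fderiv ℝ (fun y => h y j j) x (EuclideanSpace.single i 1)) * (x i / ρ)‖
      ≤ 2 * C * ρ ^ (-(n:ℝ)) := by
    intro i j
    have h1 : |x i / ρ| ≤ 1 := by
      rw [abs_div, abs_of_pos hρ0, div_le_one hρ0, ← hx]
      exact PiLp.norm_apply_le x i
    have h2 := abs_sub (fderiv ℝ (fun y => h y i j) x (EuclideanSpace.single j 1))
      (fderiv ℝ (fun y => h y j j) x (EuclideanSpace.single i 1))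
    rw [Real.norm_eq_abs, abs_mul]
    refine (mul_le_of_le_one_right (abs_nonneg _) h1).trans ?_
    linarith [hhb i j j, hhb j j i]
  calc _ ≤ ∑ i : Fin n, ∑ j : Fin n, 2 * C * ρ ^ (-(n:ℝ)) :=
        norm_sum_le_of_le _ fun i _ => norm_sum_le_of_le _ fun j _ => hterm i j
    _ = _ := by simp; ring

theorem adm_mass_of_asymptotically_schwarzschild {n : ℕ} (hn : 3 ≤ n) (m : ℝ)
    (g h : EuclideanSpace ℝ (Fin n) → Fin n → Fin n → ℝ) (C : ℝ)
    (hsmooth : ∀ i j, ContDiffOn ℝ (⊤ : ℕ∞) (fun x => g x i j)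
      {x : EuclideanSpace ℝ (Fin n) | 1 < ‖x‖})
    (hsymm : ∀ x : EuclideanSpace ℝ (Fin n), 1 < ‖x‖ → ∀ i j, g x i j = g x j i)
    (hdef : ∀ x : EuclideanSpace ℝ (Fin n), 1 < ‖x‖ → ∀ i j,
      g x i j = (1 + m / (2 * ‖x‖ ^ ((n : ℝ) - 2))) ^ ((4 : ℝ) / ((n : ℝ) - 2))
          * (if i = j then 1 else 0) + h x i j)
    (hdecay : ∀ x : EuclideanSpace ℝ (Fin n), 1 < ‖x‖ → ∀ i j,
      |h x i j| + ‖x‖ * ‖fderiv ℝ (fun y => h y i j) x‖ ≤ C * ‖x‖ ^ ((1 : ℝ) - n)) :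
    Filter.Tendsto (fun ρ : ℝ =>
      (1 / (2 * ((n : ℝ) - 1) *
          (μH[(n : ℝ) - 1] (Metric.sphere (0 : EuclideanSpace ℝ (Fin n)) 1)).toReal)) *
        ∫ x in Metric.sphere (0 : EuclideanSpace ℝ (Fin n)) ρ,
          (∑ i : Fin n, ∑ j : Fin n,
            (fderiv ℝ (fun y => g y i j) x (EuclideanSpace.single j 1)
              - fderiv ℝ (fun y => g y j j) x (EuclideanSpace.single i 1)) * (x i / ρ))
          ∂(μH[(n : ℝ) - 1]))
      Filter.atTop (nhds m) := by
  have h3 : (3:ℝ) ≤ n := by exact_mod_cast hn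
  set S := (μH[(n : ℝ) - 1] (Metric.sphere (0 : EuclideanSpace ℝ (Fin n)) 1)).toReal with hS
  have hS' : 0 < μH[(n : ℝ) - 1] (Metric.sphere (0 : EuclideanSpace ℝ (Fin n)) 1) ∧
      μH[(n : ℝ) - 1] (Metric.sphere (0 : EuclideanSpace ℝ (Fin n)) 1) < ⊤ := by
    obtain ⟨k, rfl⟩ : ∃ k, n = k + 1 := ⟨n - 1, by omega⟩
    have e : (((k + 1 : ℕ) : ℝ) - 1) = k := by push_cast; ring
    rw [e]
    exact ⟨sphere_pos k, sphere_fin k⟩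
  have hS0 : 0 < S := ENNReal.toReal_pos hS'.1.ne' hS'.2.ne
  have hscale : ∀ ρ : ℝ, 0 < ρ →
      (μH[(n : ℝ) - 1] (Metric.sphere (0 : EuclideanSpace ℝ (Fin n)) ρ)).toReal =
        ρ ^ ((n:ℝ) - 1) * S := fun ρ hρ => sphere_scale (by omega) hρ
  have hfin : ∀ ρ : ℝ, 0 < ρ →
      μH[(n : ℝ) - 1] (Metric.sphere (0 : EuclideanSpace ℝ (Fin n)) ρ) < ⊤ := by
    intro ρ hρ
    have h1 := hscale ρ hρ
    by_contra hc
    rw [not_lt, top_le_iff] at hc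
    rw [hc] at h1
    have : 0 < ρ ^ ((n:ℝ) - 1) * S := by positivity
    simp at h1
    rcases h1 with h1 | h1
    · exact (Real.rpow_pos_of_pos hρ _).ne' h1
    · exact hS0.ne' h1
  have hopen : IsOpen {x : EuclideanSpace ℝ (Fin n) | 1 < ‖x‖} :=
    isOpen_lt continuous_const continuous_norm
  -- limits
  have hbase : Filter.Tendsto (fun ρ : ℝ => 1 + m / (2 * ρ ^ ((n : ℝ) - 2)))
      Filter.atTop (nhds 1) := by
    have h1 := (tendsto_rpow_atTop (y := (n:ℝ) - 2) (by linarith)).const_mul_atTop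
      (two_pos (α := ℝ))
    simpa using (h1.const_div_atTop m).const_add 1
  have hpow : Filter.Tendsto (fun ρ : ℝ => m * (1 + m / (2 * ρ ^ ((n : ℝ) - 2)))
      ^ ((4 : ℝ) / ((n : ℝ) - 2) - 1)) Filter.atTop (nhds m) := by
    have := (hbase.rpow_const (p := (4 : ℝ) / ((n : ℝ) - 2) - 1) (Or.inl one_ne_zero)).const_mul m
    simpa using this
  have herr : Filter.Tendsto (fun ρ : ℝ => (n * n * 2 * C) / (2 * ((n:ℝ) - 1)) * ρ⁻¹)
      Filter.atTop (nhds 0) := by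
    simpa using tendsto_inv_atTop_zero.const_mul ((n * n * 2 * C) / (2 * ((n:ℝ) - 1)))
  have hdiff : Filter.Tendsto (fun ρ : ℝ =>
      (1 / (2 * ((n : ℝ) - 1) * S)) *
        (∫ x in Metric.sphere (0 : EuclideanSpace ℝ (Fin n)) ρ,
          (∑ i : Fin n, ∑ j : Fin n,
            (fderiv ℝ (fun y => g y i j) x (EuclideanSpace.single j 1)
              - fderiv ℝ (fun y => g y j j) x (EuclideanSpace.single i 1)) * (x i / ρ))
          ∂(μH[(n : ℝ) - 1])) - m * (1 + m / (2 * ρ ^ ((n : ℝ) - 2)))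
      ^ ((4 : ℝ) / ((n : ℝ) - 2) - 1)) Filter.atTop (nhds 0) := by
    refine squeeze_zero_norm' ?_ herr
    filter_upwards [Filter.eventually_gt_atTop 1, hbase.eventually_const_lt one_pos] with ρ hρ hb
    have hρ0 : 0 < ρ := by linarith
    have hest := flux_est hn m g h C hsmooth hdef hdecay ρ hρ hb
    set B := (1 + m / (2 * ρ ^ ((n : ℝ) - 2))) ^ ((4 : ℝ) / ((n : ℝ) - 2) - 1) with hB
    set f : EuclideanSpace ℝ (Fin n) → ℝ := fun x => ∑ i : Fin n, ∑ j : Fin n,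
            (fderiv ℝ (fun y => g y i j) x (EuclideanSpace.single j 1)
              - fderiv ℝ (fun y => g y j j) x (EuclideanSpace.single i 1)) * (x i / ρ) with hf
    have hsub : Metric.sphere (0 : EuclideanSpace ℝ (Fin n)) ρ ⊆
        {x : EuclideanSpace ℝ (Fin n) | 1 < ‖x‖} := by
      intro x hx
      rw [mem_sphere_zero_iff_norm] at hx
      simp [hx, hρ]
    have hfc : ContinuousOn f (Metric.sphere (0 : EuclideanSpace ℝ (Fin n)) ρ) := by
      have hc : ∀ i j k, ContinuousOn (fun x => fderiv ℝ (fun y => g y i j) x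
          (EuclideanSpace.single k 1)) (Metric.sphere (0 : EuclideanSpace ℝ (Fin n)) ρ) := by
        intro i j k
        have h1 := ((hsmooth i j).continuousOn_fderiv_of_isOpen hopen (by simp)).mono hsub
        exact h1.clm_apply continuousOn_const
      refine continuousOn_finset_sum _ fun i _ => continuousOn_finset_sum _ fun j _ => ?_
      refine ((hc i j j).sub (hc j j i)).mul ?_
      exact Continuous.continuousOn (by fun_prop)
    have hms : MeasurableSet (Metric.sphere (0 : EuclideanSpace ℝ (Fin n)) ρ) :=
      Metric.isClosed_sphere.measurableSet
    have hint : IntegrableOn f (Metric.sphere (0 : EuclideanSpace ℝ (Fin n)) ρ)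
        (μH[(n : ℝ) - 1]) := by
      obtain ⟨K, hK⟩ := (isCompact_sphere (0 : EuclideanSpace ℝ (Fin n)) ρ).exists_bound_of_continuousOn hfc
      exact IntegrableOn.of_bound (hfin ρ hρ0) (hfc.aestronglyMeasurable hms) K
        ((ae_restrict_iff' hms).2 (Filter.Eventually.of_forall hK))
    set A := 2 * ((n:ℝ) - 1) * m * ρ ^ (1 - (n : ℝ)) * B with hA
    have hle := norm_setIntegral_le_of_norm_le_const (f := fun x => f x - A)
      (C := (n * n * 2 * C) * ρ ^ (-(n:ℝ))) (hfin ρ hρ0)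
      (fun x hx => hest x (mem_sphere_zero_iff_norm.1 hx))
    have hcint : IntegrableOn (fun _ : EuclideanSpace ℝ (Fin n) => A)
        (Metric.sphere (0 : EuclideanSpace ℝ (Fin n)) ρ) (μH[(n : ℝ) - 1]) :=
      integrableOn_const (hfin ρ hρ0).ne
    rw [integral_sub hint hcint, setIntegral_const, Measure.real, hscale ρ hρ0, smul_eq_mul] at hle
    set I := ∫ x in Metric.sphere (0 : EuclideanSpace ℝ (Fin n)) ρ, f x ∂(μH[(n : ℝ) - 1]) with hI
    have hn1 : 0 < (n:ℝ) - 1 := by linarith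
    have e1 : ρ ^ ((n:ℝ) - 1) * ρ ^ (1 - (n:ℝ)) = 1 := by
      rw [← Real.rpow_add hρ0]; simp
    have e2 : ρ ^ (-(n:ℝ)) * ρ ^ ((n:ℝ) - 1) = ρ⁻¹ := by
      rw [← Real.rpow_add hρ0, ← Real.rpow_neg_one]; congr 1; ring
    have e3 : 1 / (2 * ((n : ℝ) - 1) * S) * I - m * B =
        1 / (2 * ((n : ℝ) - 1) * S) * (I - ρ ^ ((n:ℝ) - 1) * S * A) := by
      have : ρ ^ ((n:ℝ) - 1) * S * A = (2 * ((n:ℝ) - 1) * S) * (m * B) := by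
        rw [hA]
        linear_combination (2 * ((n:ℝ) - 1) * S * m * B) * e1
      rw [this]
      field_simp
    rw [e3, norm_mul, Real.norm_of_nonneg (by positivity)]
    refine (mul_le_mul_of_nonneg_left hle (by positivity)).trans_eq ?_
    rw [← e2]
    field_simp
  have := hdiff.add hpow
  simpa using this
end

section
/- Let n ≥ 3 and let u be a bounded harmonic function on the exterior domain {x ∈ ℝⁿ : |x| > 1} such that u(x) → 0 as |x| → ∞. Then there exist a constant A ∈ ℝ and a constant C > 0 such that |u(x) - A·|x|^{2-n}| ≤ C·|x|^{1-n} for all |x| ≥ 2. -/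
open scoped BigOperators

/-- The Euclidean Laplacian `Δu = ∑ i, ∂²u/∂xᵢ²` of a function on `ℝⁿ`. -/
noncomputable def euclideanLaplacian {n : ℕ} (u : EuclideanSpace ℝ (Fin n) → ℝ)
    (x : EuclideanSpace ℝ (Fin n)) : ℝ :=
  ∑ i : Fin n,
    fderiv ℝ (fun y => fderiv ℝ u y (EuclideanSpace.single i 1)) x
      (EuclideanSpace.single i 1)

open MeasureTheory Filter Topology Set

namespace HarmExp

/-- truncated quadratic -/
noncomputable def kk (r : ℝ) : ℝ := max 0 (1 - r ^ 2)

lemma kk_nonneg (r : ℝ) : 0 ≤ kk r := le_max_left _ _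
lemma kk_le_one (r : ℝ) : kk r ≤ 1 := max_le zero_le_one (by nlinarith [sq_nonneg r])
lemma kk_cont : Continuous kk := by unfold kk; fun_prop
lemma kk_eq_zero {r : ℝ} (h : 1 ≤ r) : kk r = 0 := max_eq_left (by nlinarith)

lemma kk_lip {r s : ℝ} (hr : 0 ≤ r) (hs : 0 ≤ s) : |kk r - kk s| ≤ 2 * |r - s| := by
  wlog h : r ≤ s generalizing r s
  · rw [abs_sub_comm, abs_sub_comm r]
    exact this hs hr (le_of_not_ge h)
  rw [abs_sub_comm r, abs_of_nonneg (sub_nonneg.2 h)]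
  unfold kk
  rw [abs_le]
  rcases le_total s 1 with h1 | h1
  · rw [max_eq_right (by nlinarith), max_eq_right (by nlinarith)]
    constructor <;> nlinarith
  · rw [max_eq_left (a := 0) (b := 1 - s ^ 2) (by nlinarith)]
    rcases le_total r 1 with h2 | h2
    · rw [max_eq_right (by nlinarith)]
      constructor <;> nlinarith
    · rw [max_eq_left (by nlinarith)]
      constructor <;> nlinarith

lemma kk_sq_lip {r s : ℝ} (hr : 0 ≤ r) (hs : 0 ≤ s) :
    |kk r ^ 2 - kk s ^ 2| ≤ 4 * |r - s| := by
  have h := kk_lip hr hs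
  have : kk r ^ 2 - kk s ^ 2 = (kk r + kk s) * (kk r - kk s) := by ring
  rw [this, abs_mul, abs_of_nonneg (add_nonneg (kk_nonneg _) (kk_nonneg _))]
  have h1 := kk_le_one r
  have h2 := kk_le_one s
  nlinarith [abs_nonneg (kk r - kk s)]

lemma hasDerivAt_max_sq (s : ℝ) : HasDerivAt (fun s : ℝ => (max 0 s) ^ 2) (2 * max 0 s) s := by
  rcases lt_trichotomy s 0 with h | h | h
  · rw [max_eq_left h.le, mul_zero]
    refine (hasDerivAt_const s (0 : ℝ)).congr_of_eventuallyEq ?_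
    filter_upwards [Iio_mem_nhds h] with t ht
    rw [max_eq_left (le_of_lt ht)]; norm_num
  · subst h
    simp only [max_self, mul_zero]
    rw [hasDerivAt_iff_isLittleO]
    simp only [smul_zero, sub_zero]
    have : (fun x : ℝ => x ^ 2) =o[𝓝 0] fun x : ℝ => x := by
      simpa using (Asymptotics.isLittleO_pow_pow (𝕜 := ℝ) (m := 1) (n := 2) (by norm_num))
    refine Asymptotics.IsBigO.trans_isLittleO ?_ this
    refine Asymptotics.IsBigO.of_bound 1 (Eventually.of_forall fun x => ?_)
    simp only [Real.norm_eq_abs, one_mul]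
    have h0 : (max (0 : ℝ) 0) ^ 2 = 0 := by norm_num
    rw [h0, sub_zero, abs_pow, abs_pow]
    refine pow_le_pow_left₀ (abs_nonneg _) ?_ 2
    rcases le_total 0 x with h | h
    · rw [max_eq_right h]
    · rw [max_eq_left h, abs_zero]; exact abs_nonneg x
  · rw [max_eq_right h.le]
    have := (hasDerivAt_pow 2 s)
    refine HasDerivAt.congr_of_eventuallyEq (f := fun t => t ^ 2) (by simpa using this) ?_
    filter_upwards [Ioi_mem_nhds h] with t ht
    rw [max_eq_right (le_of_lt ht)]

variable {n : ℕ}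

lemma hasFDerivAt_H (z : EuclideanSpace ℝ (Fin n)) :
    HasFDerivAt (fun z : EuclideanSpace ℝ (Fin n) => kk ‖z‖ ^ 2)
      ((2 * kk ‖z‖) • (-((2 : ℝ) • innerSL ℝ z))) z := by
  have h1 : HasFDerivAt (fun z : EuclideanSpace ℝ (Fin n) => 1 - ‖z‖ ^ 2)
      (-((2 : ℝ) • innerSL ℝ z)) z := by
    refine ((hasStrictFDerivAt_norm_sq z).hasFDerivAt.const_sub 1).congr_fderiv ?_
    ext v; simp [two_mul]
  exact (hasDerivAt_max_sq (1 - ‖z‖ ^ 2)).comp_hasFDerivAt z h1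

lemma fderiv_H_single (z : EuclideanSpace ℝ (Fin n)) (i : Fin n) :
    fderiv ℝ (fun z : EuclideanSpace ℝ (Fin n) => kk ‖z‖ ^ 2) z (EuclideanSpace.single i 1)
      = - (4 * kk ‖z‖ * z i) := by
  rw [(hasFDerivAt_H z).fderiv]
  simp [EuclideanSpace.inner_single_right]
  ring

lemma compactSupp_K : HasCompactSupport (fun z : EuclideanSpace ℝ (Fin n) => kk ‖z‖) := by
  refine HasCompactSupport.of_support_subset_isCompact (isCompact_closedBall 0 1) ?_
  intro z hz
  simp only [Metric.mem_closedBall, dist_zero_right]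
  by_contra h
  exact hz (kk_eq_zero (not_le.1 h).le)

lemma compactSupp_H : HasCompactSupport (fun z : EuclideanSpace ℝ (Fin n) => kk ‖z‖ ^ 2) := by
  simp_rw [pow_two]
  exact compactSupp_K.mul_right

lemma kn_cont : Continuous (fun z : EuclideanSpace ℝ (Fin n) => kk ‖z‖) :=
  kk_cont.comp continuous_norm

/-- weighted mean -/
noncomputable def MM (w : EuclideanSpace ℝ (Fin n) → ℝ) (x : EuclideanSpace ℝ (Fin n))
    (t : ℝ) : ℝ := ∫ z, w (x + t • z) * (4 * kk ‖z‖)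

lemma hasDerivAt_MM1 {w : EuclideanSpace ℝ (Fin n) → ℝ} (hw : ContDiff ℝ 2 w)
    (x : EuclideanSpace ℝ (Fin n)) (t : ℝ) :
    HasDerivAt (MM w x) (∫ z, fderiv ℝ w (x + t • z) z * (4 * kk ‖z‖)) t := by
  have hc1 : Continuous (fun p : EuclideanSpace ℝ (Fin n) × EuclideanSpace ℝ (Fin n) =>
      fderiv ℝ w p.1 p.2) := (hw.contDiff_fderiv_apply (m := 1) (by norm_num)).continuous
  have hwc := hw.continuous
  have hk := kn_cont (n := n)
  have hc2 : Continuous (fun p : ℝ × EuclideanSpace ℝ (Fin n) =>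
      fderiv ℝ w (x + p.1 • p.2) p.2 * (4 * kk ‖p.2‖)) := by
    refine Continuous.mul ?_ (continuous_const.mul (hk.comp continuous_snd))
    exact hc1.comp (by fun_prop :
      Continuous (fun p : ℝ × EuclideanSpace ℝ (Fin n) => (x + p.1 • p.2, p.2)))
  obtain ⟨B, hB⟩ := ((isCompact_closedBall t 1).prod
    (isCompact_closedBall (0 : EuclideanSpace ℝ (Fin n)) 1)).exists_bound_of_continuousOn
      hc2.continuousOn
  refine (hasDerivAt_integral_of_dominated_loc_of_deriv_le
    (F := fun t z => w (x + t • z) * (4 * kk ‖z‖))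
    (F' := fun t z => fderiv ℝ w (x + t • z) z * (4 * kk ‖z‖))
    (bound := (Metric.closedBall (0 : EuclideanSpace ℝ (Fin n)) 1).indicator fun _ => B)
    (Metric.closedBall_mem_nhds t one_pos) ?_ ?_ ?_ ?_ ?_ ?_).2
  · refine Eventually.of_forall fun s => Continuous.aestronglyMeasurable ?_
    fun_prop
  · refine Continuous.integrable_of_hasCompactSupport (by fun_prop) ?_
    exact (compactSupp_K.mul_left (f := fun _ => (4 : ℝ))).mul_left
  · exact (hc2.comp (by fun_prop : Continuous fun z => (t, z))).aestronglyMeasurable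
  · refine Eventually.of_forall fun z s hs => ?_
    by_cases hz : z ∈ Metric.closedBall (0 : EuclideanSpace ℝ (Fin n)) 1
    · rw [indicator_of_mem hz]
      exact hB (s, z) ⟨hs, hz⟩
    · rw [indicator_of_notMem hz]
      have : kk ‖z‖ = 0 := kk_eq_zero (by
        simp only [Metric.mem_closedBall, dist_zero_right, not_le] at hz
        exact hz.le)
      simp [this]
  · exact (integrable_indicator_iff measurableSet_closedBall).2
      (integrableOn_const (isCompact_closedBall _ _).measure_lt_top.ne)
  · refine Eventually.of_forall fun z s _ => ?_
    refine HasDerivAt.mul_const ?_ _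
    have h1 : HasDerivAt (fun s : ℝ => x + s • z) z s := by
      simpa using ((hasDerivAt_id s).smul_const z).const_add x
    exact ((hw.differentiable (by norm_num)) (x + s • z)).hasFDerivAt.comp_hasDerivAt s h1

lemma lap_cont {w : EuclideanSpace ℝ (Fin n) → ℝ} (hw : ContDiff ℝ 2 w) :
    Continuous (euclideanLaplacian w) := by
  unfold euclideanLaplacian
  refine continuous_finsetSum _ fun i _ => ?_
  have h1 : ContDiff ℝ 1 (fun y => fderiv ℝ w y (EuclideanSpace.single i 1)) :=
    (hw.fderiv_right (m := 1) (by norm_num)).clm_apply contDiff_const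
  exact ((h1.continuous_fderiv (by norm_num)).clm_apply continuous_const)

lemma MM_deriv_eq {w : EuclideanSpace ℝ (Fin n) → ℝ} (hw : ContDiff ℝ 2 w)
    (x : EuclideanSpace ℝ (Fin n)) (t : ℝ) :
    ∫ z, fderiv ℝ w (x + t • z) z * (4 * kk ‖z‖)
      = t * ∫ z, euclideanLaplacian w (x + t • z) * kk ‖z‖ ^ 2 := by
  have hk := kn_cont (n := n)
  set g : Fin n → EuclideanSpace ℝ (Fin n) → ℝ :=
    fun i y => fderiv ℝ w y (EuclideanSpace.single i 1) with hg
  have hgd : ∀ i, ContDiff ℝ 1 (g i) := fun i =>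
    (hw.fderiv_right (m := 1) (by norm_num)).clm_apply contDiff_const
  have hgc : ∀ i, Continuous (g i) := fun i => (hgd i).continuous
  have hgc2 : ∀ i, Continuous (fun y => fderiv ℝ (g i) y (EuclideanSpace.single i 1)) := fun i =>
    ((hgd i).continuous_fderiv (by norm_num)).clm_apply continuous_const
  have hG : ∀ i z, HasFDerivAt (fun z => g i (x + t • z)) (t • fderiv ℝ (g i) (x + t • z)) z := by
    intro i z
    have h1 : HasFDerivAt (fun z : EuclideanSpace ℝ (Fin n) => x + t • z)
        (t • ContinuousLinearMap.id ℝ _) z := ((hasFDerivAt_id z).const_smul t).const_add x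
    have h2 := (((hgd i).differentiable (by norm_num)) (x + t • z)).hasFDerivAt.comp z h1
    refine h2.congr_fderiv ?_
    ext v; simp
  have e1 : ∀ z : EuclideanSpace ℝ (Fin n), fderiv ℝ w (x + t • z) z * (4 * kk ‖z‖)
      = ∑ i, -(g i (x + t • z) * fderiv ℝ (fun z : EuclideanSpace ℝ (Fin n) => kk ‖z‖ ^ 2) z
          (EuclideanSpace.single i 1)) := by
    intro z
    have hz : z = ∑ i, z i • EuclideanSpace.single i (1 : ℝ) := by
      ext j
      simp [Finset.sum_apply, Pi.single_apply]
    conv_lhs => rw [show fderiv ℝ w (x + t • z) z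
      = fderiv ℝ w (x + t • z) (∑ i, z i • EuclideanSpace.single i (1 : ℝ)) by rw [← hz]]
    rw [map_sum, Finset.sum_mul]
    refine Finset.sum_congr rfl fun i _ => ?_
    rw [fderiv_H_single, map_smul, smul_eq_mul]
    ring
  have hint : ∀ i, Integrable (fun z : EuclideanSpace ℝ (Fin n) => g i (x + t • z) *
      fderiv ℝ (fun z : EuclideanSpace ℝ (Fin n) => kk ‖z‖ ^ 2) z
          (EuclideanSpace.single i 1)) := by
    intro i
    simp_rw [fderiv_H_single]
    have := hgc i
    refine Continuous.integrable_of_hasCompactSupport (by fun_prop) ?_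
    refine compactSupp_K.mono ?_
    intro z hz hz0
    exact hz (by simp only [hz0]; ring)
  have hint2 : ∀ i, Integrable (fun z : EuclideanSpace ℝ (Fin n) =>
      fderiv ℝ (g i) (x + t • z) (EuclideanSpace.single i 1) * kk ‖z‖ ^ 2) := by
    intro i
    have := hgc2 i
    refine Continuous.integrable_of_hasCompactSupport ?_ compactSupp_H.mul_left
    exact (this.comp (by fun_prop : Continuous fun z => x + t • z)).mul (hk.pow 2)
  simp_rw [e1]
  rw [integral_finsetSum _ fun i _ => by simpa using (hint i).neg]
  unfold euclideanLaplacian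
  simp_rw [Finset.sum_mul]
  rw [integral_finsetSum _ fun i _ => hint2 i, Finset.mul_sum]
  refine Finset.sum_congr rfl fun i _ => ?_
  have hfd : ∀ z, fderiv ℝ (fun z => g i (x + t • z)) z (EuclideanSpace.single i 1)
      = t * fderiv ℝ (g i) (x + t • z) (EuclideanSpace.single i 1) := by
    intro z; rw [(hG i z).fderiv]; simp
  rw [integral_neg, integral_mul_fderiv_eq_neg_fderiv_mul_of_integrable _ (hint i), neg_neg]
  · simp_rw [hfd, mul_assoc]
    rw [integral_const_mul]
  · have := hgc i
    exact Continuous.integrable_of_hasCompactSupport (by fun_prop) compactSupp_H.mul_left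
  · exact fun z _ => (hG i z).differentiableAt
  · exact fun z _ => (hasFDerivAt_H z).differentiableAt
  · simp_rw [hfd, mul_assoc]
    exact (hint2 i).const_mul t

lemma MM_zero (w : EuclideanSpace ℝ (Fin n) → ℝ) (x : EuclideanSpace ℝ (Fin n)) :
    MM w x 0 = w x * ∫ z : EuclideanSpace ℝ (Fin n), 4 * kk ‖z‖ := by
  unfold MM
  simp only [zero_smul, add_zero]
  rw [integral_const_mul]

lemma int_K_pos : 0 < ∫ z : EuclideanSpace ℝ (Fin n), 4 * kk ‖z‖ := by
  have hk := kn_cont (n := n)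
  refine Continuous.integral_pos_of_hasCompactSupport_nonneg_nonzero (x := 0) (by fun_prop)
    (compactSupp_K.mul_left (f := fun _ => (4 : ℝ))) ?_ ?_
  · intro z
    have := kk_nonneg ‖z‖
    simp only [Pi.zero_apply]
    positivity
  · simp [kk]

lemma MM_tendsto (hn : 3 ≤ n) {w : EuclideanSpace ℝ (Fin n) → ℝ} (hwc : Continuous w)
    {B : ℝ} (hB : ∀ y, |w y| ≤ B)
    (hlim : Tendsto w (comap norm atTop) (𝓝 0)) (x : EuclideanSpace ℝ (Fin n)) :
    Tendsto (MM w x) atTop (𝓝 0) := by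
  have hk := kn_cont (n := n)
  have : Nonempty (Fin n) := ⟨⟨0, by omega⟩⟩
  have : Tendsto (MM w x) atTop
      (𝓝 (∫ z : EuclideanSpace ℝ (Fin n), (0 : ℝ))) := by
    refine tendsto_integral_filter_of_dominated_convergence (fun z => B * (4 * kk ‖z‖)) ?_ ?_ ?_ ?_
    · exact Eventually.of_forall fun s => Continuous.aestronglyMeasurable (by fun_prop)
    · refine Eventually.of_forall fun s => Eventually.of_forall fun z => ?_
      have := kk_nonneg ‖z‖
      rw [norm_mul, Real.norm_eq_abs, Real.norm_eq_abs, abs_of_nonneg (by positivity : 0 ≤ 4 * kk ‖z‖)]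
      exact mul_le_mul_of_nonneg_right (hB _) (by positivity)
    · refine Continuous.integrable_of_hasCompactSupport (by fun_prop) ?_
      exact (compactSupp_K.mul_left (f := fun _ => (4 : ℝ))).mul_left (f := fun _ => B)
    · have h0 : ∀ᵐ z : EuclideanSpace ℝ (Fin n), z ≠ 0 := by
        rw [ae_iff]; simp
      filter_upwards [h0] with z hz
      have h1 : Tendsto (fun t : ℝ => ‖x + t • z‖) atTop atTop := by
        have h2 : Tendsto (fun t : ℝ => t * ‖z‖ + -‖x‖) atTop atTop :=
          tendsto_atTop_add_const_right _ _ (tendsto_id.atTop_mul_const (norm_pos_iff.2 hz))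
        refine tendsto_atTop_mono' _ ?_ h2
        filter_upwards [eventually_ge_atTop 0] with t ht
        have h3 : ‖t • z‖ ≤ ‖x + t • z‖ + ‖x‖ := by
          have := norm_sub_le (x + t • z) x
          simpa using this
        rw [norm_smul, Real.norm_eq_abs, abs_of_nonneg ht] at h3
        linarith
      have h4 : Tendsto (fun t : ℝ => w (x + t • z)) atTop (𝓝 0) :=
        hlim.comp (tendsto_comap_iff.2 h1)
      simpa using h4.mul_const (4 * kk ‖z‖)
  simpa using this

lemma change_var (f : EuclideanSpace ℝ (Fin n) → ℝ) (x : EuclideanSpace ℝ (Fin n)) {t : ℝ}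
    (ht : 0 < t) : ∫ z, f (x + t • z) * kk ‖z‖ ^ 2
      = (t ^ n)⁻¹ * ∫ y, f y * kk (‖y - x‖ / t) ^ 2 := by
  have h1 := Measure.integral_comp_smul (volume : Measure (EuclideanSpace ℝ (Fin n)))
    (fun y => f (x + y) * kk (‖y‖ / t) ^ 2) t
  have h2 := integral_add_left_eq_self (μ := (volume : Measure (EuclideanSpace ℝ (Fin n))))
    (fun y => f y * kk (‖y - x‖ / t) ^ 2) x
  simp only [add_sub_cancel_left] at h2
  rw [← h2]
  rw [finrank_euclideanSpace_fin, abs_of_pos (by positivity), smul_eq_mul] at h1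
  rw [← h1]
  congr 1
  ext z
  rw [norm_smul, Real.norm_eq_abs, abs_of_pos ht, mul_div_cancel_left₀ _ ht.ne']

lemma err_bound {f : EuclideanSpace ℝ (Fin n) → ℝ} (hf : Continuous f)
    (hsupp : ∀ y, 3 / 2 ≤ ‖y‖ → f y = 0) (x : EuclideanSpace ℝ (Fin n)) {t : ℝ}
    (ht : 0 < t) :
    |t * (∫ z, f (x + t • z) * kk ‖z‖ ^ 2) - (∫ y, f y) * (t * (t ^ n)⁻¹ * kk (‖x‖ / t) ^ 2)|
      ≤ (6 * ∫ y, |f y|) * t ^ (-(n : ℝ)) := by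
  have hk := kn_cont (n := n)
  have hkc := kk_cont
  have hfs : HasCompactSupport f := by
    refine HasCompactSupport.of_support_subset_isCompact (isCompact_closedBall 0 (3 / 2)) ?_
    intro z hz
    simp only [Metric.mem_closedBall, dist_zero_right]
    by_contra h
    exact hz (hsupp z (not_le.1 h).le)
  have hfi : Integrable f := hf.integrable_of_hasCompactSupport hfs
  have hi1 : Integrable (fun y => f y * kk (‖y - x‖ / t) ^ 2) :=
    Continuous.integrable_of_hasCompactSupport (by fun_prop) hfs.mul_right
  have hi2 : Integrable (fun y => f y * kk (‖x‖ / t) ^ 2) := hfi.mul_const _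
  rw [change_var f x ht]
  have e : t * ((t ^ n)⁻¹ * ∫ y, f y * kk (‖y - x‖ / t) ^ 2)
      - (∫ y, f y) * (t * (t ^ n)⁻¹ * kk (‖x‖ / t) ^ 2)
      = t * (t ^ n)⁻¹ * ∫ y, (f y * kk (‖y - x‖ / t) ^ 2 - f y * kk (‖x‖ / t) ^ 2) := by
    rw [integral_sub hi1 hi2, integral_mul_const]
    ring
  have hb : |∫ y, (f y * kk (‖y - x‖ / t) ^ 2 - f y * kk (‖x‖ / t) ^ 2)|
      ≤ ∫ y, |f y| * (6 / t) := by
    rw [← Real.norm_eq_abs]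
    refine norm_integral_le_of_norm_le (hfi.abs.mul_const _) (Eventually.of_forall fun y => ?_)
    rw [← mul_sub, norm_mul, Real.norm_eq_abs, Real.norm_eq_abs]
    rcases le_or_gt (3 / 2) ‖y‖ with h | h
    · rw [hsupp y h]; simp
    · refine mul_le_mul_of_nonneg_left ?_ (abs_nonneg _)
      refine (kk_sq_lip (by positivity) (by positivity)).trans ?_
      rw [← sub_div, abs_div, abs_of_pos ht, ← mul_div_assoc]
      have h1 : |‖y - x‖ - ‖x‖| ≤ ‖y‖ := by
        rw [norm_sub_rev y x]
        have := abs_norm_sub_norm_le (x - y) x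
        simpa using this
      gcongr
      linarith
  rw [e, abs_mul, abs_of_pos (by positivity)]
  refine (mul_le_mul_of_nonneg_left hb (by positivity)).trans (le_of_eq ?_)
  rw [integral_mul_const, Real.rpow_neg ht.le, Real.rpow_natCast]
  field_simp

lemma err_zero {f : EuclideanSpace ℝ (Fin n) → ℝ}
    (hsupp : ∀ y, 3 / 2 ≤ ‖y‖ → f y = 0) {x : EuclideanSpace ℝ (Fin n)} (hx : 2 ≤ ‖x‖) {t : ℝ}
    (ht0 : 0 ≤ t) (ht : t ≤ ‖x‖ / 4) : ∫ z, f (x + t • z) * kk ‖z‖ ^ 2 = 0 := by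
  rw [← integral_zero (EuclideanSpace ℝ (Fin n)) ℝ]
  congr 1
  ext z
  rcases le_total 1 ‖z‖ with h | h
  · rw [kk_eq_zero h]; simp
  · rw [hsupp, zero_mul]
    have h1 : ‖x‖ ≤ ‖x + t • z‖ + ‖t • z‖ := by
      have := norm_sub_le (x + t • z) (t • z)
      simpa using this
    rw [norm_smul, Real.norm_eq_abs, abs_of_nonneg ht0] at h1
    nlinarith

/-- profile -/
noncomputable def qq (n : ℕ) (s : ℝ) : ℝ := s * (s ^ n)⁻¹ * kk (1 / s) ^ 2

lemma qq_contAt {s : ℝ} (hs : 0 < s) : ContinuousAt (qq n) s := by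
  unfold qq
  have := kk_cont
  have h1 : ContinuousAt (fun s : ℝ => kk (1 / s)) s :=
    this.continuousAt.comp (continuousAt_const.div continuousAt_id hs.ne')
  refine ContinuousAt.mul (ContinuousAt.mul continuousAt_id ?_) (h1.pow 2)
  exact (continuousAt_id.pow n).inv₀ (pow_ne_zero n hs.ne')

lemma qq_integrable (hn : 3 ≤ n) : IntegrableOn (qq n) (Ioi (1 / 4)) := by
  have hn' : (3 : ℝ) ≤ n := by exact_mod_cast hn
  have h := integrableOn_Ioi_rpow_of_lt (a := 1 - n) (c := 1 / 4) (by linarith) (by norm_num)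
  refine Integrable.mono' h ?_ ?_
  · refine ContinuousOn.aestronglyMeasurable (fun s hs => ?_) measurableSet_Ioi
    exact (qq_contAt (lt_trans (by norm_num) hs)).continuousWithinAt
  · refine (ae_restrict_iff' measurableSet_Ioi).2 (Eventually.of_forall fun s hs => ?_)
    have hs0 : 0 < s := lt_trans (by norm_num) hs
    have h1 := kk_nonneg (1 / s)
    have h2 := kk_le_one (1 / s)
    unfold qq
    rw [Real.norm_eq_abs, abs_of_nonneg (by positivity), Real.rpow_sub hs0, Real.rpow_one,
      Real.rpow_natCast, div_eq_mul_inv]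
    refine mul_le_of_le_one_right (by positivity) (pow_le_one₀ h1 h2)

/-- primitive of the profile -/
noncomputable def pp (n : ℕ) (s : ℝ) : ℝ := ∫ τ in (1 / 4 : ℝ)..s, qq n τ

lemma pp_deriv {s : ℝ} (hs : 1 / 4 ≤ s) : HasDerivAt (pp n) (qq n s) s := by
  have hs0 : 0 < s := lt_of_lt_of_le (by norm_num) hs
  refine intervalIntegral.integral_hasDerivAt_right ?_ ?_ (qq_contAt hs0)
  · refine ContinuousOn.intervalIntegrable fun τ hτ => ?_
    rw [uIcc_of_le hs] at hτ
    exact (qq_contAt (lt_of_lt_of_le (by norm_num) hτ.1)).continuousWithinAt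
  · refine ContinuousOn.stronglyMeasurableAtFilter (s := Ioi 0) isOpen_Ioi
      (fun τ hτ => (qq_contAt hτ).continuousWithinAt) s hs0

lemma core (hn : 3 ≤ n) {w : EuclideanSpace ℝ (Fin n) → ℝ} (hw : ContDiff ℝ 2 w)
    (hsupp : ∀ y, 3 / 2 ≤ ‖y‖ → euclideanLaplacian w y = 0)
    {B : ℝ} (hB : ∀ y, |w y| ≤ B) (hlim : Tendsto w (comap norm atTop) (𝓝 0)) :
    ∃ (A C : ℝ), 0 < C ∧ ∀ x : EuclideanSpace ℝ (Fin n), 2 ≤ ‖x‖ →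
      |w x - A * ‖x‖ ^ ((2 : ℝ) - n)| ≤ C * ‖x‖ ^ ((1 : ℝ) - n) := by
  have hn' : (3 : ℝ) ≤ n := by exact_mod_cast hn
  set f := euclideanLaplacian w with hf
  have hfc : Continuous f := lap_cont hw
  set F := ∫ y, f y with hF
  set L := ∫ y, |f y| with hL
  have hL0 : 0 ≤ L := integral_nonneg fun y => abs_nonneg _
  set c := ∫ τ in Ioi (1 / 4 : ℝ), qq n τ with hc
  set k := ∫ z : EuclideanSpace ℝ (Fin n), 4 * kk ‖z‖ with hk
  have hk0 : 0 < k := int_K_pos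
  have hD : ∀ x t, HasDerivAt (MM w x) (t * ∫ z, f (x + t • z) * kk ‖z‖ ^ 2) t := fun x t => by
    have := hasDerivAt_MM1 hw x t
    rwa [MM_deriv_eq hw] at this
  -- key bound
  set C' : ℝ := 6 * L / (n - 1) * (1 / 4) ^ ((1 : ℝ) - n) with hC'
  have hC'0 : 0 ≤ C' := by
    have : (0 : ℝ) < n - 1 := by linarith
    positivity
  have key : ∀ x : EuclideanSpace ℝ (Fin n), 2 ≤ ‖x‖ →
      |k * w x + F * c * ‖x‖ ^ ((2 : ℝ) - n)| ≤ C' * ‖x‖ ^ ((1 : ℝ) - n) := by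
    intro x hx
    have hx0 : 0 < ‖x‖ := by linarith
    set a := ‖x‖ / 4 with ha
    have ha0 : 0 < a := by positivity
    have hMa : MM w x a = k * w x := by
      rw [mul_comm, ← MM_zero]
      refine constant_of_has_deriv_right_zero (f := MM w x) (a := 0) (b := a) ?_ ?_ a
        ⟨ha0.le, le_rfl⟩
      · exact fun t _ => (hD x t).continuousAt.continuousWithinAt
      · intro t ht
        have := hD x t
        rw [err_zero hsupp hx ht.1 ht.2.le, mul_zero] at this
        exact this.hasDerivWithinAt
    set D : ℝ → ℝ := fun t => MM w x t - F * (‖x‖ ^ ((2 : ℝ) - n) * pp n (t / ‖x‖)) - k * w x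
      with hDdef
    have hDd : ∀ t, a ≤ t → HasDerivAt D (t * (∫ z, f (x + t • z) * kk ‖z‖ ^ 2)
        - F * (t * (t ^ n)⁻¹ * kk (‖x‖ / t) ^ 2)) t := by
      intro t ht
      have ht0 : 0 < t := ha0.trans_le ht
      have h1 : HasDerivAt (fun t : ℝ => t / ‖x‖) (1 / ‖x‖) t := (hasDerivAt_id t).div_const _
      have h2 : HasDerivAt (fun t => pp n (t / ‖x‖)) (qq n (t / ‖x‖) * (1 / ‖x‖)) t := by
        refine HasDerivAt.comp t (pp_deriv ?_) h1
        rw [le_div_iff₀ hx0]; linarith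
      have h3 := ((hD x t).sub ((h2.const_mul (‖x‖ ^ ((2 : ℝ) - n))).const_mul F)).sub_const
        (k * w x)
      refine h3.congr_deriv ?_
      congr 2
      unfold qq
      rw [one_div_div, Real.rpow_sub hx0, Real.rpow_natCast, Real.rpow_ofNat, div_pow]
      field_simp
    have hbd : ∀ T, a ≤ T → |D T| ≤ C' * ‖x‖ ^ ((1 : ℝ) - n) := by
      intro T hT
      set Bf : ℝ → ℝ := fun t => 6 * L / (n - 1) * (a ^ ((1 : ℝ) - n) - t ^ ((1 : ℝ) - n)) with hBf
      have hBd : ∀ t, a ≤ t → HasDerivAt Bf ((6 * L) * t ^ (-(n : ℝ))) t := by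
        intro t ht
        have ht0 : 0 < t := ha0.trans_le ht
        have h1 := ((Real.hasDerivAt_rpow_const (x := t) (p := 1 - (n : ℝ))
          (Or.inl ht0.ne')).const_sub (a ^ ((1 : ℝ) - n))).const_mul (6 * L / (n - 1))
        refine h1.congr_deriv ?_
        have : (n : ℝ) - 1 ≠ 0 := by linarith
        rw [show (1 : ℝ) - n - 1 = -n by ring]
        field_simp
        ring
      have h := image_norm_le_of_norm_deriv_right_le_deriv_boundary' (f := D) (a := a) (b := T)
        (B := Bf) (fun t ht => (hDd t ht.1).continuousAt.continuousWithinAt)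
        (fun t ht => (hDd t ht.1).hasDerivWithinAt) ?_
        (fun t ht => (hBd t ht.1).continuousAt.continuousWithinAt)
        (fun t ht => (hBd t ht.1).hasDerivWithinAt)
        (fun t ht => err_bound hfc hsupp x (ha0.trans_le ht.1)) ⟨hT, le_rfl⟩
      · refine (h.trans ?_)
        have e : C' * ‖x‖ ^ ((1 : ℝ) - n) = 6 * L / (n - 1) * a ^ ((1 : ℝ) - n) := by
          rw [hC', ha, div_eq_mul_one_div ‖x‖ 4, Real.mul_rpow hx0.le (by norm_num)]
          ring
        rw [e, hBf]
        have : (0 : ℝ) < n - 1 := by linarith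
        refine mul_le_mul_of_nonneg_left ?_ (by positivity)
        have := Real.rpow_nonneg (ha0.le.trans hT) ((1 : ℝ) - n)
        linarith
      · have h4 : a / ‖x‖ = 1 / 4 := by rw [ha]; field_simp
        simp only [hDdef, hBf, hMa, h4, pp, intervalIntegral.integral_same, mul_zero, sub_zero,
          sub_self, norm_zero, le_refl]
    have hlimD : Tendsto D atTop (𝓝 (0 - F * (‖x‖ ^ ((2 : ℝ) - n) * c) - k * w x)) := by
      refine ((MM_tendsto hn hw.continuous hB hlim x).sub
        (Tendsto.const_mul F (Tendsto.const_mul _ ?_))).sub_const _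
      exact intervalIntegral_tendsto_integral_Ioi (1 / 4) (qq_integrable hn)
        (tendsto_id.atTop_div_const hx0)
    have := le_of_tendsto hlimD.abs ((eventually_ge_atTop a).mono hbd)
    rw [← abs_neg]
    refine le_trans (le_of_eq ?_) this
    congr 1
    ring
  refine ⟨-(F * c / k), C' / k + 1, by positivity, fun x hx => ?_⟩
  have h := key x hx
  have hx0 : 0 < ‖x‖ := by linarith
  have e : w x - -(F * c / k) * ‖x‖ ^ ((2 : ℝ) - n)
      = (k * w x + F * c * ‖x‖ ^ ((2 : ℝ) - n)) / k := by field_simp; ring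
  rw [e, abs_div, abs_of_pos hk0, add_mul, div_mul_eq_mul_div, one_mul]
  have h5 := Real.rpow_nonneg hx0.le ((1 : ℝ) - n)
  have h6 := (div_le_div_iff_of_pos_right hk0).2 h
  linarith

end HarmExp

/-- For `n ≥ 3`, a bounded harmonic function `u` on the exterior domain
`{|x| > 1}` with `u(x) → 0` as `|x| → ∞` admits the expansion
`|u(x) - A·|x|^{2-n}| ≤ C·|x|^{1-n}` for `|x| ≥ 2`, for some constants `A ∈ ℝ`, `C > 0`. -/
theorem harmonic_expansion_at_infinity {n : ℕ} (hn : 3 ≤ n)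
    {u : EuclideanSpace ℝ (Fin n) → ℝ}
    (hu : ContDiffOn ℝ 2 u {x : EuclideanSpace ℝ (Fin n) | 1 < ‖x‖})
    (hharm : ∀ x : EuclideanSpace ℝ (Fin n), 1 < ‖x‖ → euclideanLaplacian u x = 0)
    (hbdd : ∃ B : ℝ, ∀ x : EuclideanSpace ℝ (Fin n), 1 < ‖x‖ → |u x| ≤ B)
    (hlim : ∀ ε : ℝ, 0 < ε → ∃ R : ℝ,
      ∀ x : EuclideanSpace ℝ (Fin n), R ≤ ‖x‖ → |u x| ≤ ε) :
    ∃ (A C : ℝ), 0 < C ∧ ∀ x : EuclideanSpace ℝ (Fin n), 2 ≤ ‖x‖ →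
      |u x - A * ‖x‖ ^ ((2 : ℝ) - n)| ≤ C * ‖x‖ ^ ((1 : ℝ) - n) := by
  obtain ⟨B, hB⟩ := hbdd
  let χ : ContDiffBump (0 : EuclideanSpace ℝ (Fin n)) := ⟨6 / 5, 7 / 5, by norm_num, by norm_num⟩
  set w : EuclideanSpace ℝ (Fin n) → ℝ := fun x => (1 - χ x) * u x with hwdef
  have hopen : IsOpen {x : EuclideanSpace ℝ (Fin n) | 1 < ‖x‖} :=
    isOpen_lt continuous_const continuous_norm
  have hw0 : ∀ x, ‖x‖ ≤ 6 / 5 → w x = 0 := by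
    intro x hx
    have : χ x = 1 := χ.one_of_mem_closedBall (by simpa using hx)
    simp [hwdef, this]
  have hwu : ∀ x, 7 / 5 ≤ ‖x‖ → w x = u x := by
    intro x hx
    have : χ x = 0 := χ.zero_of_le_dist (by simpa using hx)
    simp [hwdef, this]
  have hwle : ∀ x, |w x| ≤ |u x| := by
    intro x
    simp only [hwdef, abs_mul]
    have h1 := χ.nonneg (x := x)
    have h2 := χ.le_one (x := x)
    exact mul_le_of_le_one_left (abs_nonneg _) (abs_le.2 ⟨by linarith, by linarith⟩)
  have hwC : ContDiff ℝ 2 w := by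
    rw [contDiff_iff_contDiffAt]
    intro x
    rcases lt_or_ge 1 ‖x‖ with h | h
    · exact (contDiffAt_const.sub χ.contDiffAt).mul (hu.contDiffAt (hopen.mem_nhds h))
    · refine (contDiffAt_const (c := (0 : ℝ))).congr_of_eventuallyEq ?_
      have : {y : EuclideanSpace ℝ (Fin n) | ‖y‖ < 6 / 5} ∈ nhds x :=
        (isOpen_lt continuous_norm continuous_const).mem_nhds
          (lt_of_le_of_lt h (by norm_num))
      filter_upwards [this] with y hy
      exact hw0 y (le_of_lt hy)
  have hsupp : ∀ y, 3 / 2 ≤ ‖y‖ → euclideanLaplacian w y = 0 := by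
    intro y hy
    rw [← hharm y (by linarith)]
    have hev : w =ᶠ[nhds y] u := by
      have : {z : EuclideanSpace ℝ (Fin n) | 7 / 5 < ‖z‖} ∈ nhds y :=
        (isOpen_lt continuous_const continuous_norm).mem_nhds
          (lt_of_lt_of_le (by norm_num) hy)
      filter_upwards [this] with z hz
      exact hwu z (le_of_lt hz)
    unfold euclideanLaplacian
    refine Finset.sum_congr rfl fun i _ => ?_
    have h2 : (fun z => fderiv ℝ w z (EuclideanSpace.single i 1)) =ᶠ[nhds y]
        (fun z => fderiv ℝ u z (EuclideanSpace.single i 1)) := by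
      filter_upwards [hev.fderiv (𝕜 := ℝ)] with z hz
      rw [hz]
    rw [h2.fderiv_eq]
  have hwB : ∀ y, |w y| ≤ max B 0 := by
    intro y
    rcases lt_or_ge 1 ‖y‖ with h | h
    · exact (hwle y).trans ((hB y h).trans (le_max_left _ _))
    · rw [hw0 y (h.trans (by norm_num)), abs_zero]; exact le_max_right _ _
  have hwlim : Filter.Tendsto w (Filter.comap norm Filter.atTop) (nhds 0) := by
    rw [Metric.tendsto_nhds]
    intro ε hε
    obtain ⟨R, hR⟩ := hlim (ε / 2) (by linarith)
    filter_upwards [Filter.preimage_mem_comap (Filter.mem_atTop R)] with x hx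
    rw [dist_zero_right, Real.norm_eq_abs]
    have := (hwle x).trans (hR x hx)
    linarith
  obtain ⟨A, C, hC, h⟩ := HarmExp.core hn hwC hsupp hwB hwlim
  refine ⟨A, C, hC, fun x hx => ?_⟩
  rw [← hwu x (by linarith)]
  exact h x hx
end
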